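/- Let q ∈ ℝ with |q| > 1, n ≥ 1, and let H = ℓ²(ℕⁿ) with standard orthonormal basis (e_k) indexed by k = (k₀, …, k_{n−1}) ∈ ℕⁿ. Fix a sign ± and define operators on H by: X₀ e_k = ± q^{−(k₀+⋯+k_{n−1})} e_k, and for i = 1, …, n, X_i e_k = (1 − q^{−2k_{i−1}})^{1/2} q^{−(k_i+⋯+k_{n−1})} e_{k − δ_{i−1}} (interpreted as 0 when k_{i−1} = 0, where δ_{i−1} decreases the (i−1)-th index by 1). Then these formulas define bounded operators X₀, X₁, …, X_n on H, X₀ is self-adjoint, the adjoint X_i* acts by X_i* e_k = (1 − q^{−2(k_{i−1}+1)})^{1/2} q^{−(k_i+⋯+k_{n−1})} e_{k + δ_{i−1}}, and X₀, X₁, …, X_n satisfy the S^{2n}_q relations: X_i X_j = q X_j X_i for 0 ≤ i < j ≤ n; X_i* X_j = q X_j X_i* for i ≠ j; X_i X_i* − X_i* X_i = (1 − q⁻²) S_{i−1} for i = 1, …, n; and S_n = 1, where S₀ := X₀² and S_i := S_{i−1} + X_i* X_i. -/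

import Mathlib

/-- Partial radii: `s 0 = x₀ * x₀` and `s (i+1) = s i + (x (i+1))* * x (i+1)`. -/
def sEven {A : Type*} [Ring A] [StarRing A] (x : ℕ → A) : ℕ → A
  | 0 => x 0 * x 0
  | i + 1 => sEven x i + star (x (i + 1)) * x (i + 1)

/-- The standard orthonormal basis vector of `ℓ²(ℕⁿ)` at `k`. -/
noncomputable def eVec (n : ℕ) (k : Fin n → ℕ) : lp (fun _ : Fin n → ℕ => ℂ) 2 :=
  lp.single 2 k 1

/-! The operators have polar decompositions `X_i = V_i⋆ D_i` with `V_i` the unilateral shift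
`e_k ↦ e_{k + δ_{i-1}}` (`V_0 = 1`) and `D_i` diagonal with entries `w_i`. Put
`r_i k = q ^ (-(k_i + ⋯ + k_{n-1}))`. Then `w_0 ^ 2 = r_0 ^ 2` and
`w_{i+1} ^ 2 = r_{i+1} ^ 2 - r_i ^ 2`, so that the sum `S_i` telescopes to the diagonal operator
with entries `r_i ^ 2`; in particular `S_n = 1`. For `i ≠ j` the factors of `X_i` and `X_j` and
their adjoints commute, except that raising `k_{j-1}` divides `w_i` by `q` if `i < j`, so that
`D_i V_j⋆ = q V_j⋆ D_i`; this is the source of the factor `q` in the commutation relations. -/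

open scoped ENNReal lp

section QCommutation

variable {R A : Type*} [SMul R A]

/-- Commutation of `x` and `y` up to the scalar `c`, as in the relations `X_i X_j = q X_j X_i`. -/
def QCommute [Mul A] (c : R) (x y : A) : Prop := x * y = c • (y * x)

variable {c : R} {x y z : A}

theorem QCommute.mul_right [Semigroup A] [IsScalarTower R A A] (hxy : QCommute c x y)
    (hxz : Commute x z) : QCommute c x (y * z) := by
  rw [QCommute, ← mul_assoc, hxy, smul_mul_assoc, mul_assoc, hxz.eq, mul_assoc]

theorem QCommute.mul_left [Semigroup A] [IsScalarTower R A A] (hxz : QCommute c x z)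
    (hyz : Commute y z) : QCommute c (x * y) z := by
  rw [QCommute, mul_assoc, hyz.eq, ← mul_assoc, hxz, smul_mul_assoc, mul_assoc]

theorem QCommute.mul_left' [Semigroup A] [SMulCommClass R A A] (hyz : QCommute c y z)
    (hxz : Commute x z) : QCommute c (x * y) z := by
  rw [QCommute, mul_assoc, hyz, mul_smul_comm, ← mul_assoc, hxz.eq, mul_assoc]

theorem QCommute.star [Mul A] [StarMul A] [Star R] [StarModule R A] (hxy : QCommute c x y) :
    QCommute (star c) (star y) (star x) := by
  rw [QCommute, ← star_mul, hxy, star_smul, star_mul]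

end QCommutation

section OperatorsOnEll2

variable {ι 𝕜 : Type*} [RCLike 𝕜]

theorem continuousLinearMap_ext_single [DecidableEq ι] {F : Type*} [AddCommMonoid F] [Module 𝕜 F]
    [TopologicalSpace F] [T2Space F] {S T : ℓ²(ι, 𝕜) →L[𝕜] F}
    (h : ∀ k, S (lp.single 2 k 1) = T (lp.single 2 k 1)) : S = T :=
  lp.ext_continuousLinearMap ENNReal.ofNat_ne_top fun k => ContinuousLinearMap.ext_ring (h k)

theorem star_apply_eq_inner_single [DecidableEq ι] (T : ℓ²(ι, 𝕜) →L[𝕜] ℓ²(ι, 𝕜)) (f : ℓ²(ι, 𝕜))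
    (k : ι) : star T f k = inner 𝕜 (T (lp.single 2 k 1)) f := by
  rw [← ContinuousLinearMap.adjoint_inner_right, lp.inner_single_left,
    ContinuousLinearMap.star_eq_adjoint]
  simp

/-- Multiplication by a bounded function `a`, as an operator on `ℓ²`. -/
noncomputable def diagonalOp (a : lp (fun _ : ι => 𝕜) ∞) : ℓ²(ι, 𝕜) →L[𝕜] ℓ²(ι, 𝕜) :=
  lp.holderL 2 (K := 1) (fun _ => ContinuousLinearMap.mul 𝕜 𝕜) (fun _ => by simp) a

theorem diagonalOp_apply (a : lp (fun _ : ι => 𝕜) ∞) (f : ℓ²(ι, 𝕜)) (k : ι) :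
    diagonalOp a f k = a k * f k := rfl

theorem diagonalOp_single [DecidableEq ι] (a : lp (fun _ : ι => 𝕜) ∞) (k : ι) :
    diagonalOp a (lp.single 2 k 1) = a k • lp.single 2 k 1 := by
  ext m
  obtain rfl | h := eq_or_ne m k <;> simp [diagonalOp_apply, *]

theorem diagonalOp_one : diagonalOp (1 : lp (fun _ : ι => 𝕜) ∞) = 1 := by
  ext f k
  exact one_mul _

theorem diagonalOp_mul (a b : lp (fun _ : ι => 𝕜) ∞) :
    diagonalOp (a * b) = diagonalOp a * diagonalOp b := by
  ext f k
  exact mul_assoc _ _ _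

theorem diagonalOp_sub (a b : lp (fun _ : ι => 𝕜) ∞) :
    diagonalOp (a - b) = diagonalOp a - diagonalOp b := map_sub _ a b

theorem diagonalOp_smul (c : 𝕜) (a : lp (fun _ : ι => 𝕜) ∞) :
    diagonalOp (c • a) = c • diagonalOp a := map_smul _ c a

theorem star_diagonalOp (a : lp (fun _ : ι => 𝕜) ∞) :
    star (diagonalOp a) = diagonalOp (star a) := by
  classical
  ext f k
  rw [star_apply_eq_inner_single, diagonalOp_single, inner_smul_left, lp.inner_single_left,
    diagonalOp_apply, lp.star_apply]
  simp

/-- The isometry of `ℓ²` that sends the basis vector at `k` to the one at `σ k`. -/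
noncomputable def shiftOp (σ : ι ↪ ι) : ℓ²(ι, 𝕜) →L[𝕜] ℓ²(ι, 𝕜) :=
  (((default : HilbertBasis ι 𝕜 ℓ²(ι, 𝕜)).orthonormal.comp σ σ.injective).orthogonalFamily
    |>.linearIsometry).toContinuousLinearMap

theorem shiftOp_single [DecidableEq ι] (σ : ι ↪ ι) (k : ι) :
    shiftOp (𝕜 := 𝕜) σ (lp.single 2 k 1) = lp.single 2 (σ k) 1 := by
  have h : (default : HilbertBasis ι 𝕜 ℓ²(ι, 𝕜)) (σ k) = lp.single 2 (σ k) 1 := by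
    rw [← HilbertBasis.repr_symm_single]; rfl
  simp [shiftOp, h]

theorem shiftOp_commute {σ τ : ι ↪ ι} (h : ∀ k, σ (τ k) = τ (σ k)) :
    Commute (shiftOp (𝕜 := 𝕜) σ) (shiftOp τ) := by
  classical
  refine continuousLinearMap_ext_single fun k => ?_
  simp only [mul_apply_eq_comp, shiftOp_single, h]

theorem shiftOp_refl : shiftOp (𝕜 := 𝕜) (.refl ι) = 1 := by
  classical
  exact continuousLinearMap_ext_single fun k => shiftOp_single _ k

theorem star_shiftOp_apply (σ : ι ↪ ι) (f : ℓ²(ι, 𝕜)) (k : ι) :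
    star (shiftOp σ) f k = f (σ k) := by
  classical
  rw [star_apply_eq_inner_single, shiftOp_single, lp.inner_single_left]
  simp

theorem star_shiftOp_mul_self (σ : ι ↪ ι) : star (shiftOp (𝕜 := 𝕜) σ) * shiftOp σ = 1 :=
  LinearIsometry.adjoint_comp_self _

theorem star_shiftOp_single [DecidableEq ι] (σ : ι ↪ ι) (k : ι) :
    star (shiftOp (𝕜 := 𝕜) σ) (lp.single 2 (σ k) 1) = lp.single 2 k 1 := by
  ext m
  simp [star_shiftOp_apply, lp.single_apply, Pi.single_apply]

theorem star_shiftOp_single_of_notMem_range [DecidableEq ι] {σ : ι ↪ ι} {k : ι}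
    (hk : k ∉ Set.range σ) : star (shiftOp (𝕜 := 𝕜) σ) (lp.single 2 k 1) = 0 := by
  ext m
  have : σ m ≠ k := fun h => hk ⟨m, h⟩
  simp [star_shiftOp_apply, lp.single_apply, this]

theorem diagonalOp_mul_star_shiftOp {a b : lp (fun _ : ι => 𝕜) ∞} {σ : ι ↪ ι}
    (h : ∀ k, a (σ k) = b k) :
    diagonalOp b * star (shiftOp σ) = star (shiftOp σ) * diagonalOp a := by
  ext f k
  simp only [mul_apply_eq_comp, diagonalOp_apply, star_shiftOp_apply, h]

theorem diagonalOp_commute (a b : lp (fun _ : ι => 𝕜) ∞) :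
    Commute (diagonalOp a) (diagonalOp b) := by
  rw [commute_iff_eq, ← diagonalOp_mul, mul_comm, diagonalOp_mul]

theorem diagonalOp_qCommute_star_shiftOp {a : lp (fun _ : ι => 𝕜) ∞} {σ : ι ↪ ι} {c : 𝕜}
    (h : ∀ k, c * a (σ k) = a k) : QCommute c (diagonalOp a) (star (shiftOp σ)) := by
  rw [QCommute, ← mul_smul_comm, ← diagonalOp_smul]
  exact diagonalOp_mul_star_shiftOp h

theorem star_shiftOp_mul_diagonalOp_mul_shiftOp {a b : lp (fun _ : ι => 𝕜) ∞} {σ : ι ↪ ι}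
    (h : ∀ k, a (σ k) = b k) :
    star (shiftOp σ) * diagonalOp a * shiftOp σ = diagonalOp b := by
  rw [← diagonalOp_mul_star_shiftOp h, mul_assoc, star_shiftOp_mul_self, mul_one]

theorem star_shiftOp_commute_shiftOp {σ τ : ι ↪ ι} (hcomm : ∀ k, σ (τ k) = τ (σ k))
    (hrange : ∀ k, τ k ∈ Set.range σ → k ∈ Set.range σ) :
    Commute (star (shiftOp (𝕜 := 𝕜) σ)) (shiftOp τ) := by
  classical
  refine continuousLinearMap_ext_single fun k => ?_
  rw [mul_apply_eq_comp, mul_apply_eq_comp, shiftOp_single]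
  by_cases hk : k ∈ Set.range σ
  · obtain ⟨m, rfl⟩ := hk
    rw [← hcomm, star_shiftOp_single, star_shiftOp_single, shiftOp_single]
  · rw [star_shiftOp_single_of_notMem_range hk, map_zero,
      star_shiftOp_single_of_notMem_range (mt (hrange k) hk)]

theorem shiftOp_mul_star_mul_diagonalOp {a : lp (fun _ : ι => 𝕜) ∞} {σ : ι ↪ ι}
    (ha : ∀ k ∉ Set.range σ, a k = 0) :
    shiftOp σ * (star (shiftOp σ) * diagonalOp a) = diagonalOp a := by
  classical
  refine continuousLinearMap_ext_single fun k => ?_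
  rw [mul_apply_eq_comp, mul_apply_eq_comp, diagonalOp_single, map_smul, map_smul]
  by_cases hk : k ∈ Set.range σ
  · obtain ⟨m, rfl⟩ := hk
    rw [star_shiftOp_single, shiftOp_single]
  · rw [ha k hk, zero_smul, zero_smul]

end OperatorsOnEll2

section MultiIndex

variable {n : ℕ} {i j : ℕ} {k : Fin n → ℕ}

/-- The `(i-1)`-th unit multi-index; it is zero if `i = 0`, so that the operators `X₀` and `X_i`
can be treated alike, and also if `i > n`. -/
def raiseUnit (n i : ℕ) : Fin n → ℕ := fun j => if (j : ℕ) + 1 = i then 1 else 0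

/-- The map `k ↦ k + δ_{i-1}` on multi-indices, which is the identity for `i = 0`. -/
def raise (n i : ℕ) : (Fin n → ℕ) ↪ (Fin n → ℕ) := addRightEmbedding (raiseUnit n i)

theorem raise_apply (i : ℕ) (k : Fin n → ℕ) (j : Fin n) :
    raise n i k j = k j + if (j : ℕ) + 1 = i then 1 else 0 := rfl

theorem raise_zero : raise n 0 = .refl (Fin n → ℕ) := by
  ext k j
  simp [raise_apply]

theorem raise_succ (i : Fin n) (k : Fin n → ℕ) :
    raise n (i + 1) k = Function.update k i (k i + 1) := by
  ext j
  obtain rfl | h := eq_or_ne j i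
  · simp [raise_apply]
  · simp [raise_apply, h, Fin.val_ne_of_ne h]

theorem raise_comm (i j : ℕ) (k : Fin n → ℕ) :
    raise n i (raise n j k) = raise n j (raise n i k) :=
  add_right_comm _ _ _

theorem raise_succ_update_pred {i : Fin n} (hk : k i ≠ 0) :
    raise n (i + 1) (Function.update k i (k i - 1)) = k := by
  rw [raise_succ, Function.update_self, Nat.sub_one_add_one hk, Function.update_idem,
    Function.update_eq_self]

theorem mem_range_raise : k ∈ Set.range (raise n i) ↔ ∀ j : Fin n, (j : ℕ) + 1 = i → k j ≠ 0 := by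
  constructor
  · rintro ⟨m, rfl⟩ j hj
    simp [raise_apply, hj]
  · intro hk
    refine ⟨k - raiseUnit n i, funext fun j => ?_⟩
    have := hk j
    simp only [raise_apply, Pi.sub_apply, raiseUnit]
    grind

theorem mem_range_raise_of_raise_mem (hij : i ≠ j) (h : raise n j k ∈ Set.range (raise n i)) :
    k ∈ Set.range (raise n i) := by
  rw [mem_range_raise] at h ⊢
  intro l hl
  have hlj : (l : ℕ) + 1 ≠ j := hl ▸ hij
  simpa [raise_apply, hlj] using h l hl

/-- The exponent `k_i + ⋯ + k_{n-1}` of `q⁻¹` in the formula for `X_i`. -/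
def tailSum (i : ℕ) (k : Fin n → ℕ) : ℕ := ∑ j ∈ {j : Fin n | i ≤ (j : ℕ)}, k j

theorem tailSum_zero (k : Fin n → ℕ) : tailSum 0 k = ∑ j, k j := by
  simp [tailSum]

theorem tailSum_succ (i : Fin n) (k : Fin n → ℕ) : tailSum (i + 1) k = ∑ j with i < j, k j := rfl

theorem tailSum_raise_of_le (h : j ≤ i) (k : Fin n → ℕ) :
    tailSum i (raise n j k) = tailSum i k := by
  refine Finset.sum_congr rfl fun l hl => ?_
  have hlj : (l : ℕ) + 1 ≠ j := by grind
  simp [raise_apply, hlj]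

theorem tailSum_raise_of_lt (hij : i < j) (hj : j ≤ n) (k : Fin n → ℕ) :
    tailSum i (raise n j k) = tailSum i k + 1 := by
  obtain ⟨l, rfl⟩ : ∃ l : Fin n, j = l + 1 := ⟨⟨j - 1, by omega⟩, by grind⟩
  simp [tailSum, raise_apply, Finset.sum_add_distrib, Fin.val_inj, Nat.le_of_lt_succ hij]

theorem tailSum_eq_add (i : Fin n) (k : Fin n → ℕ) :
    tailSum i k = k i + tailSum (i + 1) k := by
  have h : (Finset.univ.filter fun j : Fin n => (i : ℕ) ≤ j) =
      insert i (Finset.univ.filter fun j : Fin n => (i : ℕ) + 1 ≤ j) := by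
    ext j
    grind
  rw [tailSum, h, Finset.sum_insert (by simp), tailSum]

theorem tailSum_self (k : Fin n → ℕ) : tailSum n k = 0 := by
  simp [tailSum]

end MultiIndex

section Weights

variable {q ε : ℝ} {n i j : ℕ}

theorem memℓp_infty_ofReal {ι : Type*} {w : ι → ℝ} {C : ℝ} (hw : ∀ k, |w k| ≤ C) :
    Memℓp (fun k => (w k : ℂ)) ∞ :=
  memℓp_infty ⟨C, by rintro _ ⟨k, rfl⟩; simpa using hw k⟩

theorem abs_inv_pow_le_one (hq : 1 ≤ |q|) (m : ℕ) : |(q ^ m)⁻¹| ≤ 1 := by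
  rw [abs_inv, abs_pow]
  exact inv_le_one_of_one_le₀ (one_le_pow₀ hq)

theorem inv_pow_le_one (hq : 1 ≤ |q|) (m : ℕ) : (q ^ m)⁻¹ ≤ 1 :=
  (le_abs_self _).trans (abs_inv_pow_le_one hq m)

/-- The bounded function `r_i k = q ^ (-(k_i + ⋯ + k_{n-1}))`. -/
noncomputable def radialWeight (n : ℕ) (hq : 1 ≤ |q|) (i : ℕ) : lp (fun _ : Fin n → ℕ => ℂ) ∞ :=
  ⟨fun k => ((q ^ tailSum i k)⁻¹ : ℝ), memℓp_infty_ofReal fun _ => abs_inv_pow_le_one hq _⟩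

/-- The factor of `X_i e_k` other than the power `q ^ (-(k_i + ⋯ + k_{n-1}))`: the sign `ε` for
`i = 0` and `(1 - q ^ (-2 k_{i-1})) ^ (1/2)` for `i > 0`. Here `k` is extended by zero beyond its
last index, so that `i` may be any natural number. -/
noncomputable def angularCoeff (q ε : ℝ) : ℕ → (Fin n → ℕ) → ℝ
  | 0, _ => ε
  | i + 1, k => √(1 - (q ^ (2 * Function.extend Fin.val k 0 i))⁻¹)

theorem angularCoeff_succ (i : Fin n) (k : Fin n → ℕ) :
    angularCoeff q ε (i + 1) k = √(1 - (q ^ (2 * k i))⁻¹) := by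
  rw [angularCoeff, Fin.val_injective.extend_apply]

theorem angularCoeff_succ_raise_self (i : Fin n) (k : Fin n → ℕ) :
    angularCoeff q ε (i + 1) (raise n (i + 1) k) = √(1 - (q ^ (2 * (k i + 1)))⁻¹) := by
  rw [angularCoeff_succ, raise_succ, Function.update_self]

theorem abs_angularCoeff_le (k : Fin n → ℕ) : |angularCoeff q ε i k| ≤ max |ε| 1 := by
  cases i with
  | zero => exact le_max_left _ _
  | succ i =>
    refine le_max_of_le_right ?_
    rw [angularCoeff, abs_of_nonneg (Real.sqrt_nonneg _), Real.sqrt_le_iff, one_pow, pow_mul]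
    exact ⟨zero_le_one, sub_le_self _ (by positivity)⟩

theorem angularCoeff_raise_of_ne (hij : i ≠ j) (k : Fin n → ℕ) :
    angularCoeff q ε i (raise n j k) = angularCoeff q ε i k := by
  cases i with
  | zero => rfl
  | succ i =>
    by_cases hi : i < n
    · rw [angularCoeff_succ ⟨i, hi⟩, angularCoeff_succ ⟨i, hi⟩, raise_apply, if_neg hij, add_zero]
    · simp only [angularCoeff]
      rw [Function.extend_apply' _ _ _ (by grind), Function.extend_apply' _ _ _ (by grind)]

theorem angularCoeff_eq_zero {k : Fin n → ℕ} (hk : k ∉ Set.range (raise n i)) :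
    angularCoeff q ε i k = 0 := by
  rw [mem_range_raise] at hk
  push Not at hk
  obtain ⟨j, rfl, hj⟩ := hk
  simp [angularCoeff_succ, hj]

/-- The bounded function `w_i` of coefficients of `X_i`. -/
noncomputable def sphereWeight (n : ℕ) (hq : 1 ≤ |q|) (ε : ℝ) (i : ℕ) :
    lp (fun _ : Fin n → ℕ => ℂ) ∞ :=
  ⟨fun k => (angularCoeff q ε i k : ℝ), memℓp_infty_ofReal abs_angularCoeff_le⟩ *
    radialWeight n hq i

variable (hq : 1 ≤ |q|)

theorem sphereWeight_apply (k : Fin n → ℕ) :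
    sphereWeight n hq ε i k = ((angularCoeff q ε i k * (q ^ tailSum i k)⁻¹ : ℝ) : ℂ) :=
  (Complex.ofReal_mul _ _).symm

theorem star_sphereWeight : star (sphereWeight n hq ε i) = sphereWeight n hq ε i := by
  ext k
  rw [lp.star_apply, sphereWeight_apply]
  exact Complex.conj_ofReal _

theorem radialWeight_raise_of_le (h : j ≤ i) (k : Fin n → ℕ) :
    radialWeight n hq i (raise n j k) = radialWeight n hq i k := by
  simp only [radialWeight, tailSum_raise_of_le h]

theorem radialWeight_raise_of_lt (hij : i < j) (hj : j ≤ n) (k : Fin n → ℕ) :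
    radialWeight n hq i (raise n j k) = (q : ℂ)⁻¹ * radialWeight n hq i k := by
  simp only [radialWeight, tailSum_raise_of_lt hij hj]
  push_cast
  ring

theorem sphereWeight_raise_of_gt (h : j < i) (k : Fin n → ℕ) :
    sphereWeight n hq ε i (raise n j k) = sphereWeight n hq ε i k := by
  simp only [sphereWeight_apply, angularCoeff_raise_of_ne h.ne', tailSum_raise_of_le h.le]

theorem sphereWeight_raise_of_lt (hij : i < j) (hj : j ≤ n) (k : Fin n → ℕ) :
    sphereWeight n hq ε i (raise n j k) = (q : ℂ)⁻¹ * sphereWeight n hq ε i k := by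
  simp only [sphereWeight_apply, angularCoeff_raise_of_ne hij.ne, tailSum_raise_of_lt hij hj]
  push_cast
  ring

theorem sphereWeight_eq_zero {k : Fin n → ℕ} (hk : k ∉ Set.range (raise n i)) :
    sphereWeight n hq ε i k = 0 := by
  rw [sphereWeight_apply, angularCoeff_eq_zero hk, zero_mul, Complex.ofReal_zero]

theorem sphereWeight_zero_sq (hε : ε ^ 2 = 1) :
    sphereWeight n hq ε 0 ^ 2 = radialWeight n hq 0 ^ 2 := by
  ext k
  rw [lp.infty_coeFn_pow, lp.infty_coeFn_pow, Pi.pow_apply, Pi.pow_apply, sphereWeight_apply,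
    Complex.ofReal_mul, mul_pow, ← Complex.ofReal_pow, angularCoeff, hε, Complex.ofReal_one,
    one_mul, radialWeight]

theorem sphereWeight_succ_sq (i : Fin n) :
    sphereWeight n hq ε (i + 1) ^ 2 = radialWeight n hq (i + 1) ^ 2 - radialWeight n hq i ^ 2 := by
  ext k
  have hreal : (angularCoeff q ε (i + 1) k * (q ^ tailSum (i + 1) k)⁻¹) ^ 2 =
      ((q ^ tailSum (i + 1) k)⁻¹) ^ 2 - ((q ^ tailSum i k)⁻¹) ^ 2 := by
    rw [mul_pow, angularCoeff_succ, Real.sq_sqrt (sub_nonneg.2 (inv_pow_le_one hq _)),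
      tailSum_eq_add]
    ring
  rw [lp.coeFn_sub, Pi.sub_apply, lp.infty_coeFn_pow, lp.infty_coeFn_pow, lp.infty_coeFn_pow,
    Pi.pow_apply, Pi.pow_apply, Pi.pow_apply, sphereWeight_apply]
  simpa [radialWeight] using congrArg Complex.ofReal hreal

end Weights

section SphereOperators

variable {q ε : ℝ} {n i j : ℕ} (hq : 1 ≤ |q|)

/-- The operator `X_i` of the representation, in its polar decomposition. For `i = 0` the shift is
trivial. -/
noncomputable def sphereOp (n : ℕ) (hq : 1 ≤ |q|) (ε : ℝ) (i : ℕ) :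
    ℓ²(Fin n → ℕ, ℂ) →L[ℂ] ℓ²(Fin n → ℕ, ℂ) :=
  star (shiftOp (raise n i)) * diagonalOp (sphereWeight n hq ε i)

theorem star_sphereOp : star (sphereOp n hq ε i) =
    diagonalOp (sphereWeight n hq ε i) * shiftOp (raise n i) := by
  rw [sphereOp, star_mul, star_star, star_diagonalOp, star_sphereWeight]

theorem sphereOp_zero : sphereOp n hq ε 0 = diagonalOp (sphereWeight n hq ε 0) := by
  rw [sphereOp, raise_zero, shiftOp_refl, star_one, one_mul]

theorem star_sphereOp_zero : star (sphereOp n hq ε 0) = sphereOp n hq ε 0 := by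
  rw [sphereOp_zero, star_diagonalOp, star_sphereWeight]

theorem sphereOp_zero_eVec (k : Fin n → ℕ) :
    sphereOp n hq ε 0 (eVec n k) = ((ε * (q ^ (∑ j, k j))⁻¹ : ℝ) : ℂ) • eVec n k := by
  rw [sphereOp_zero, eVec, diagonalOp_single, sphereWeight_apply, angularCoeff, tailSum_zero]

theorem sphereOp_succ_eVec (i : Fin n) (k : Fin n → ℕ) :
    sphereOp n hq ε (i + 1) (eVec n k) =
      ((√(1 - (q ^ (2 * k i))⁻¹) * (q ^ (∑ j with i < j, k j))⁻¹ : ℝ) : ℂ) •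
        eVec n (Function.update k i (k i - 1)) := by
  rw [sphereOp, eVec, mul_apply_eq_comp, diagonalOp_single, map_smul, sphereWeight_apply,
    angularCoeff_succ, tailSum_succ]
  by_cases hk : k i = 0
  · simp [hk]
  · rw [eVec, ← star_shiftOp_single (raise n (i + 1)) (Function.update k i (k i - 1)),
      raise_succ_update_pred hk]

theorem star_sphereOp_succ_eVec (i : Fin n) (k : Fin n → ℕ) :
    star (sphereOp n hq ε (i + 1)) (eVec n k) =
      ((√(1 - (q ^ (2 * (k i + 1)))⁻¹) * (q ^ (∑ j with i < j, k j))⁻¹ : ℝ) : ℂ) •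
        eVec n (Function.update k i (k i + 1)) := by
  rw [star_sphereOp, eVec, mul_apply_eq_comp, shiftOp_single, diagonalOp_single,
    sphereWeight_apply, angularCoeff_succ_raise_self, tailSum_raise_of_le le_rfl, tailSum_succ,
    raise_succ, eVec]

theorem diagonalOp_sphereWeight_commute_star_shiftOp (h : j < i) :
    Commute (diagonalOp (sphereWeight n hq ε i)) (star (shiftOp (raise n j))) :=
  diagonalOp_mul_star_shiftOp (sphereWeight_raise_of_gt hq h)

theorem diagonalOp_sphereWeight_qCommute_star_shiftOp (hij : i < j) (hj : j ≤ n) :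
    QCommute (q : ℂ) (diagonalOp (sphereWeight n hq ε i)) (star (shiftOp (raise n j))) := by
  have hq0 : (q : ℂ) ≠ 0 := Complex.ofReal_ne_zero.2 (abs_pos.1 (one_pos.trans_le hq))
  refine diagonalOp_qCommute_star_shiftOp fun k => ?_
  rw [sphereWeight_raise_of_lt hq hij hj, mul_inv_cancel_left₀ hq0]

theorem sphereOp_qCommute (hij : i < j) (hj : j ≤ n) :
    QCommute (q : ℂ) (sphereOp n hq ε i) (sphereOp n hq ε j) := by
  have hVV : Commute (star (shiftOp (𝕜 := ℂ) (raise n i))) (star (shiftOp (raise n j))) :=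
    (shiftOp_commute (raise_comm i j)).star_star
  have hVD := (diagonalOp_sphereWeight_commute_star_shiftOp (n := n) (ε := ε) hq hij).symm
  have hDX := (diagonalOp_sphereWeight_qCommute_star_shiftOp (ε := ε) hq hij hj).mul_right
    (diagonalOp_commute _ (sphereWeight n hq ε j))
  exact hDX.mul_left' (hVV.mul_right hVD)

theorem star_sphereOp_qCommute_of_lt (hij : i < j) (hj : j ≤ n) :
    QCommute (q : ℂ) (star (sphereOp n hq ε i)) (sphereOp n hq ε j) := by
  have hVV : Commute (shiftOp (𝕜 := ℂ) (raise n i)) (star (shiftOp (raise n j))) :=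
    (star_shiftOp_commute_shiftOp (raise_comm j i)
      fun _ => mem_range_raise_of_raise_mem hij.ne').symm
  have hVD : Commute (shiftOp (raise n i)) (diagonalOp (sphereWeight n hq ε j)) := by
    simpa only [star_star, star_diagonalOp, star_sphereWeight] using
      (diagonalOp_sphereWeight_commute_star_shiftOp (n := n) (ε := ε) hq hij).symm.star_star
  have hDX := (diagonalOp_sphereWeight_qCommute_star_shiftOp (ε := ε) hq hij hj).mul_right
    (diagonalOp_commute _ (sphereWeight n hq ε j))
  rw [star_sphereOp]
  exact hDX.mul_left (hVV.mul_right hVD)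

theorem star_sphereOp_qCommute (hi : i ≤ n) (hj : j ≤ n) (hij : i ≠ j) :
    QCommute (q : ℂ) (star (sphereOp n hq ε i)) (sphereOp n hq ε j) := by
  obtain hlt | hgt := hij.lt_or_gt
  · exact star_sphereOp_qCommute_of_lt hq hlt hj
  · simpa only [star_star, RCLike.star_def, Complex.conj_ofReal] using
      (star_sphereOp_qCommute_of_lt (ε := ε) hq hgt hi).star

theorem star_sphereOp_mul_self (i : ℕ) :
    star (sphereOp n hq ε i) * sphereOp n hq ε i = diagonalOp (sphereWeight n hq ε i ^ 2) := by
  rw [star_sphereOp, sphereOp, mul_assoc, sq, diagonalOp_mul,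
    shiftOp_mul_star_mul_diagonalOp fun _ => sphereWeight_eq_zero hq]

theorem sphereOp_mul_star (i : ℕ) : sphereOp n hq ε i * star (sphereOp n hq ε i) =
    star (shiftOp (raise n i)) * diagonalOp (sphereWeight n hq ε i ^ 2) *
      shiftOp (raise n i) := by
  rw [star_sphereOp, sphereOp, sq, diagonalOp_mul]
  simp only [mul_assoc]

theorem sphereOp_succ_mul_star (i : Fin n) :
    sphereOp n hq ε (i + 1) * star (sphereOp n hq ε (i + 1)) =
      diagonalOp (radialWeight n hq (i + 1) ^ 2 - ((q : ℂ) ^ 2)⁻¹ • radialWeight n hq i ^ 2) := by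
  rw [sphereOp_mul_star, sphereWeight_succ_sq]
  refine star_shiftOp_mul_diagonalOp_mul_shiftOp fun k => ?_
  simp only [lp.coeFn_sub, Pi.sub_apply, lp.infty_coeFn_pow, Pi.pow_apply, lp.coeFn_smul,
    Pi.smul_apply, radialWeight_raise_of_le hq le_rfl,
    radialWeight_raise_of_lt hq (Nat.lt_succ_self i) i.2, mul_pow, inv_pow, smul_eq_mul]

theorem sEven_sphereOp (hε : ε ^ 2 = 1) (hi : i ≤ n) :
    sEven (sphereOp n hq ε) i = diagonalOp (radialWeight n hq i ^ 2) := by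
  induction i with
  | zero =>
    rw [sEven, ← sphereWeight_zero_sq hq hε, sphereOp_zero, ← diagonalOp_mul, ← sq]
  | succ i ih =>
    rw [sEven, ih (Nat.le_of_succ_le hi), star_sphereOp_mul_self, sphereWeight_succ_sq hq ⟨i, hi⟩,
      diagonalOp_sub, add_sub_cancel]

theorem sphereOp_succ_mul_star_sub (hε : ε ^ 2 = 1) (i : Fin n) :
    sphereOp n hq ε (i + 1) * star (sphereOp n hq ε (i + 1)) -
        star (sphereOp n hq ε (i + 1)) * sphereOp n hq ε (i + 1) =
      (1 - ((q : ℂ) ^ 2)⁻¹) • sEven (sphereOp n hq ε) i := by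
  rw [sphereOp_succ_mul_star, star_sphereOp_mul_self, sphereWeight_succ_sq,
    sEven_sphereOp hq hε i.is_le', ← diagonalOp_sub, ← diagonalOp_smul, sub_sub_sub_cancel_left,
    sub_smul, one_smul]

theorem radialWeight_self : radialWeight n hq n = 1 := by
  ext k
  simp [radialWeight, tailSum_self]

theorem sEven_sphereOp_self (hε : ε ^ 2 = 1) : sEven (sphereOp n hq ε) n = 1 := by
  rw [sEven_sphereOp hq hε le_rfl, radialWeight_self, one_pow, diagonalOp_one]

end SphereOperators
/-- The formulas of the irreducible representation `ψ^{(2n)}_±` of `S^{2n}_q` define bounded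
operators `X₀ = X₀*, X₁, …, Xₙ` on `ℓ²(ℕⁿ)` (with the stated adjoints) satisfying the
`S^{2n}_q` relations. -/
theorem evenSphere_representation (q : ℝ) (hq : 1 < |q|) (n : ℕ) (hn : 1 ≤ n)
    (ε : ℝ) (hε : ε = 1 ∨ ε = -1) :
    ∃ X : ℕ → (lp (fun _ : Fin n → ℕ => ℂ) 2 →L[ℂ] lp (fun _ : Fin n → ℕ => ℂ) 2),
      (∀ k : Fin n → ℕ,
        X 0 (eVec n k) = (((ε * (q ^ (∑ j, k j))⁻¹ : ℝ)) : ℂ) • eVec n k) ∧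
      (∀ i : Fin n, ∀ k : Fin n → ℕ,
        X ((i : ℕ) + 1) (eVec n k) =
          (((Real.sqrt (1 - (q ^ (2 * k i))⁻¹) *
            (q ^ (∑ j ∈ Finset.univ.filter fun j => i < j, k j))⁻¹ : ℝ)) : ℂ) •
            eVec n (Function.update k i (k i - 1))) ∧
      star (X 0) = X 0 ∧
      (∀ i : Fin n, ∀ k : Fin n → ℕ,
        star (X ((i : ℕ) + 1)) (eVec n k) =
          (((Real.sqrt (1 - (q ^ (2 * (k i + 1)))⁻¹) *
            (q ^ (∑ j ∈ Finset.univ.filter fun j => i < j, k j))⁻¹ : ℝ)) : ℂ) •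
            eVec n (Function.update k i (k i + 1))) ∧
      (∀ i j : ℕ, i < j → j ≤ n → X i * X j = (q : ℂ) • (X j * X i)) ∧
      (∀ i j : ℕ, i ≤ n → j ≤ n → i ≠ j →
        star (X i) * X j = (q : ℂ) • (X j * star (X i))) ∧
      (∀ i : ℕ, 1 ≤ i → i ≤ n →
        X i * star (X i) - star (X i) * X i = (1 - ((q : ℂ) ^ 2)⁻¹) • sEven X (i - 1)) ∧
      sEven X n = 1 := by
  have hε2 : ε ^ 2 = 1 := sq_eq_one_iff.2 hε
  refine ⟨sphereOp n hq.le ε, sphereOp_zero_eVec hq.le, sphereOp_succ_eVec hq.le,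
    star_sphereOp_zero hq.le, star_sphereOp_succ_eVec hq.le,
    fun i j => sphereOp_qCommute hq.le, fun i j => star_sphereOp_qCommute hq.le, ?_,
    sEven_sphereOp_self hq.le hε2⟩
  intro i hi0 hin
  obtain ⟨i, rfl⟩ := Nat.exists_eq_add_of_le' hi0
  exact sphereOp_succ_mul_star_sub hq.le hε2 ⟨i, hin⟩
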